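/- (Maehara's lemma for singular geometric extensions — main theorem) Let R^s be a finite set of singular geometric rules. In G+R^s, every partition Γ₁;Γ₂⇒Δ₁;Δ₂ of a derivable sequent Γ⇒Δ has a split-interpolant: there exists a formula C such that Γ₁⇒Δ₁,C and C,Γ₂⇒Δ₂ are derivable in G+R^s and L(C) ⊆ L(Γ₁,Δ₁) ∩ L(Γ₂,Δ₂). -/

import Mathlib

/-- Terms: variables or individual constants (no function symbols). -/
inductive Tm where
  | var : ℕ → Tm
  | const : ℕ → Tm
deriving DecidableEq

/-- First-order formulas over a language with denumerably many predicates,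
a logical identity predicate, ⊥, ⊤, ∧, ∨, →, ∀, ∃. -/
inductive Fm where
  | rel : ℕ → List Tm → Fm
  | eq : Tm → Tm → Fm
  | bot : Fm
  | top : Fm
  | and : Fm → Fm → Fm
  | or : Fm → Fm → Fm
  | imp : Fm → Fm → Fm
  | all : ℕ → Fm → Fm
  | ex : ℕ → Fm → Fm
deriving DecidableEq

def Fm.isAtom : Fm → Prop
  | .rel _ _ => True
  | .eq _ _ => True
  | .bot => True
  | .top => True
  | _ => False

/-- Ter(A): the free variables and individual constants of A, as terms. -/
def Fm.ter : Fm → Finset Tm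
  | .rel _ ts => ts.toFinset
  | .eq a b => {a, b}
  | .bot => ∅
  | .top => ∅
  | .and A B => A.ter ∪ B.ter
  | .or A B => A.ter ∪ B.ter
  | .imp A B => A.ter ∪ B.ter
  | .all x A => A.ter.erase (Tm.var x)
  | .ex x A => A.ter.erase (Tm.var x)

/-- Rel(A): the non-logical predicate symbols of A (identity, ⊥, ⊤ are logical). -/
def Fm.rels : Fm → Finset ℕ
  | .rel r _ => {r}
  | .eq _ _ => ∅
  | .bot => ∅
  | .top => ∅
  | .and A B => A.rels ∪ B.rels
  | .or A B => A.rels ∪ B.rels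
  | .imp A B => A.rels ∪ B.rels
  | .all _ A => A.rels
  | .ex _ A => A.rels

def Tm.consts : Tm → Finset ℕ
  | .var _ => ∅
  | .const c => {c}

/-- The individual constants occurring in A. -/
def Fm.consts : Fm → Finset ℕ
  | .rel _ ts => ts.foldr (fun t s => t.consts ∪ s) ∅
  | .eq a b => a.consts ∪ b.consts
  | .bot => ∅
  | .top => ∅
  | .and A B => A.consts ∪ B.consts
  | .or A B => A.consts ∪ B.consts
  | .imp A B => A.consts ∪ B.consts
  | .all _ A => A.consts
  | .ex _ A => A.consts

/-- L(A) = Ter(A) ∪ Rel(A). -/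
def Fm.lang (A : Fm) : Finset (Tm ⊕ ℕ) :=
  A.ter.image Sum.inl ∪ A.rels.image Sum.inr

/-- Ter of a multiset of formulas. -/
def terM (Γ : Multiset Fm) : Finset Tm := (Γ.map Fm.ter).sup

/-- L of a multiset of formulas. -/
def langM (Γ : Multiset Fm) : Finset (Tm ⊕ ℕ) := (Γ.map Fm.lang).sup

/-- s[t/u]: substitute the term t for the term u (a variable or a constant) in s. -/
def Tm.subst (s u t : Tm) : Tm := if s = u then t else s

/-- A[t/u]: substitute the term t for the term u in A (bound occurrences
of a variable u are not replaced). -/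
def Fm.subst : Fm → Tm → Tm → Fm
  | .rel r ts, u, t => .rel r (ts.map (fun s => s.subst u t))
  | .eq a b, u, t => .eq (a.subst u t) (b.subst u t)
  | .bot, _, _ => .bot
  | .top, _, _ => .top
  | .and A B, u, t => .and (A.subst u t) (B.subst u t)
  | .or A B, u, t => .or (A.subst u t) (B.subst u t)
  | .imp A B, u, t => .imp (A.subst u t) (B.subst u t)
  | .all x A, u, t => if u = Tm.var x then .all x A else .all x (A.subst u t)
  | .ex x A, u, t => if u = Tm.var x then .ex x A else .ex x (A.subst u t)

/-- t is free for u in A (no free occurrence of u is in the scope of a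
quantifier binding the variable t, if t is a variable). -/
def Fm.freeFor (t u : Tm) : Fm → Prop
  | .and A B => A.freeFor t u ∧ B.freeFor t u
  | .or A B => A.freeFor t u ∧ B.freeFor t u
  | .imp A B => A.freeFor t u ∧ B.freeFor t u
  | .all x A => u ∉ (Fm.all x A).ter ∨ (t ≠ Tm.var x ∧ A.freeFor t u)
  | .ex x A => u ∉ (Fm.ex x A).ter ∨ (t ≠ Tm.var x ∧ A.freeFor t u)
  | _ => True

/-- Simultaneous substitution of terms for variables (used on atoms). -/
def Tm.applyσ (σ : ℕ → Tm) : Tm → Tm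
  | .var x => σ x
  | .const c => .const c

def Fm.applyσ (σ : ℕ → Tm) : Fm → Fm
  | .rel r ts => .rel r (ts.map (Tm.applyσ σ))
  | .eq a b => .eq (a.applyσ σ) (b.applyσ σ)
  | .bot => .bot
  | .top => .top
  | .and A B => .and (A.applyσ σ) (B.applyσ σ)
  | .or A B => .or (A.applyσ σ) (B.applyσ σ)
  | .imp A B => .imp (A.applyσ σ) (B.applyσ σ)
  | .all x A => .all x (A.applyσ σ)
  | .ex x A => .ex x (A.applyσ σ)

/-- A geometric rule, given by its principal atoms P₁,…,Pₙ (with free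
variables x̄) and, for each of its m ≥ 1 premises, an atom Qᵢ together with
its eigenvariable yᵢ. It corresponds to the geometric axiom
∀x̄(P₁∧…∧Pₙ → ∃y₁Q₁ ∨ … ∨ ∃yₘQₘ). -/
structure GeomRule where
  Ps : List Fm
  QYs : List (Fm × ℕ)
  QYs_ne : QYs ≠ []
  atomP : ∀ P ∈ Ps, P.isAtom
  atomQ : ∀ q ∈ QYs, q.1.isAtom

/-- Rel of a list of formulas. -/
def relsL (L : List Fm) : Finset ℕ := L.foldr (fun A s => A.rels ∪ s) ∅

/-- A singular geometric rule: no individual constants occur in it, and (⋆):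
at most one non-logical predicate occurs among the Qᵢ's and Pⱼ's, and every
non-logical predicate of the Qᵢ's occurs among the Pⱼ's. -/
def GeomRule.Singular (R : GeomRule) : Prop :=
  (∀ P ∈ R.Ps, P.consts = ∅) ∧ (∀ q ∈ R.QYs, q.1.consts = ∅) ∧
  (relsL R.Ps ∪ relsL (R.QYs.map Prod.fst)).card ≤ 1 ∧
  relsL (R.QYs.map Prod.fst) ⊆ relsL R.Ps

/-- The instantiated principal atoms P₁[σ],…,Pₙ[σ] of a geometric rule. -/
def GeomRule.inst (R : GeomRule) (σ : ℕ → Tm) : Multiset Fm :=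
  ((R.Ps.map (Fm.applyσ σ) : List Fm) : Multiset Fm)

/-- `DerG Rules n Γ Δ`: the sequent Γ⇒Δ has a derivation of height at most n
in the calculus G3c extended with the geometric rules in `Rules`
(the plain calculus G is `DerG ∅`). -/
inductive DerG (Rules : Set GeomRule) : ℕ → Multiset Fm → Multiset Fm → Prop where
  | ax {n : ℕ} {P : Fm} {Γ Δ : Multiset Fm} (h : P.isAtom) :
      DerG Rules n (P ::ₘ Γ) (P ::ₘ Δ)
  | botL {n : ℕ} {Γ Δ : Multiset Fm} : DerG Rules n (Fm.bot ::ₘ Γ) Δ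
  | topR {n : ℕ} {Γ Δ : Multiset Fm} : DerG Rules n Γ (Fm.top ::ₘ Δ)
  | andL {n : ℕ} {A B : Fm} {Γ Δ : Multiset Fm} :
      DerG Rules n (A ::ₘ B ::ₘ Γ) Δ → DerG Rules (n + 1) (Fm.and A B ::ₘ Γ) Δ
  | andR {n : ℕ} {A B : Fm} {Γ Δ : Multiset Fm} :
      DerG Rules n Γ (A ::ₘ Δ) → DerG Rules n Γ (B ::ₘ Δ) →
      DerG Rules (n + 1) Γ (Fm.and A B ::ₘ Δ)
  | orL {n : ℕ} {A B : Fm} {Γ Δ : Multiset Fm} :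
      DerG Rules n (A ::ₘ Γ) Δ → DerG Rules n (B ::ₘ Γ) Δ →
      DerG Rules (n + 1) (Fm.or A B ::ₘ Γ) Δ
  | orR {n : ℕ} {A B : Fm} {Γ Δ : Multiset Fm} :
      DerG Rules n Γ (A ::ₘ B ::ₘ Δ) → DerG Rules (n + 1) Γ (Fm.or A B ::ₘ Δ)
  | impL {n : ℕ} {A B : Fm} {Γ Δ : Multiset Fm} :
      DerG Rules n Γ (A ::ₘ Δ) → DerG Rules n (B ::ₘ Γ) Δ →
      DerG Rules (n + 1) (Fm.imp A B ::ₘ Γ) Δ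
  | impR {n : ℕ} {A B : Fm} {Γ Δ : Multiset Fm} :
      DerG Rules n (A ::ₘ Γ) (B ::ₘ Δ) → DerG Rules (n + 1) Γ (Fm.imp A B ::ₘ Δ)
  | allL {n : ℕ} {x : ℕ} {A : Fm} {t : Tm} {Γ Δ : Multiset Fm}
      (hfree : A.freeFor t (Tm.var x)) :
      DerG Rules n (A.subst (Tm.var x) t ::ₘ Fm.all x A ::ₘ Γ) Δ →
      DerG Rules (n + 1) (Fm.all x A ::ₘ Γ) Δ
  | allR {n : ℕ} {x y : ℕ} {A : Fm} {Γ Δ : Multiset Fm}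
      (hfree : A.freeFor (Tm.var y) (Tm.var x))
      (hy : Tm.var y ∉ terM Γ ∪ terM Δ ∪ (Fm.all x A).ter) :
      DerG Rules n Γ (A.subst (Tm.var x) (Tm.var y) ::ₘ Δ) →
      DerG Rules (n + 1) Γ (Fm.all x A ::ₘ Δ)
  | exL {n : ℕ} {x y : ℕ} {A : Fm} {Γ Δ : Multiset Fm}
      (hfree : A.freeFor (Tm.var y) (Tm.var x))
      (hy : Tm.var y ∉ terM Γ ∪ terM Δ ∪ (Fm.ex x A).ter) :
      DerG Rules n (A.subst (Tm.var x) (Tm.var y) ::ₘ Γ) Δ →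
      DerG Rules (n + 1) (Fm.ex x A ::ₘ Γ) Δ
  | exR {n : ℕ} {x : ℕ} {A : Fm} {t : Tm} {Γ Δ : Multiset Fm}
      (hfree : A.freeFor t (Tm.var x)) :
      DerG Rules n Γ (Fm.ex x A ::ₘ A.subst (Tm.var x) t ::ₘ Δ) →
      DerG Rules (n + 1) Γ (Fm.ex x A ::ₘ Δ)
  | geom {n : ℕ} {R : GeomRule} {σ : ℕ → Tm} {Γ Δ : Multiset Fm} (hR : R ∈ Rules)
      (hfresh : ∀ q ∈ R.QYs, ∃ z : ℕ, σ q.2 = Tm.var z ∧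
          Tm.var z ∉ terM (R.inst σ + Γ) ∪ terM Δ)
      (hprem : ∀ q ∈ R.QYs, DerG Rules n (Fm.applyσ σ q.1 ::ₘ (R.inst σ + Γ)) Δ) :
      DerG Rules (n + 1) (R.inst σ + Γ) Δ

/-- Γ⇒Δ is derivable in G + Rules. -/
def Derivable (Rules : Set GeomRule) (Γ Δ : Multiset Fm) : Prop :=
  ∃ n, DerG Rules n Γ Δ

/-- C is a split-interpolant of the partition Γ₁;Γ₂⇒Δ₁;Δ₂ in G + Rules. -/
def SplitInterpolant (Rules : Set GeomRule) (Γ₁ Γ₂ Δ₁ Δ₂ : Multiset Fm) (C : Fm) : Prop :=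
  Derivable Rules Γ₁ (C ::ₘ Δ₁) ∧ Derivable Rules (C ::ₘ Γ₂) Δ₂ ∧
  C.lang ⊆ langM (Γ₁ + Δ₁) ∩ langM (Γ₂ + Δ₂)
/-- Disjunction C₁ ∨ … ∨ Cₘ of a list of formulas. -/
def disj : List Fm → Fm
  | [] => Fm.bot
  | [C] => C
  | C :: L => Fm.or C (disj L)

/-- Conjunction C₁ ∧ … ∧ Cₘ of a list of formulas. -/
def conj : List Fm → Fm
  | [] => Fm.top
  | [C] => C
  | C :: L => Fm.and C (conj L)

/-- A[z̄/t̄]: successively substitute the variable zᵢ for the term tᵢ. -/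
def Fm.substPairs : Fm → List (Tm × ℕ) → Fm
  | A, [] => A
  | A, (t, z) :: L => (A.subst t (Tm.var z)).substPairs L

/-- ∀z̄ A. -/
def foralls (zs : List ℕ) (A : Fm) : Fm := zs.foldr Fm.all A

/-- ∃z̄ A. -/
def exs (zs : List ℕ) (A : Fm) : Fm := zs.foldr Fm.ex A
open Function in
def Fm.ren : Fm → (Tm → Tm) → Fm
  | .rel r ts, f => .rel r (ts.map f)
  | .eq a b, f => .eq (f a) (f b)
  | .bot, _ => .bot
  | .top, _ => .top
  | .and A B, f => .and (A.ren f) (B.ren f)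
  | .or A B, f => .or (A.ren f) (B.ren f)
  | .imp A B, f => .imp (A.ren f) (B.ren f)
  | .all x A, f => .all x (A.ren (Function.update f (Tm.var x) (Tm.var x)))
  | .ex x A, f => .ex x (A.ren (Function.update f (Tm.var x) (Tm.var x)))

def Fm.bv : Fm → Finset ℕ
  | .and A B => A.bv ∪ B.bv
  | .or A B => A.bv ∪ B.bv
  | .imp A B => A.bv ∪ B.bv
  | .all x A => insert x A.bv
  | .ex x A => insert x A.bv
  | _ => ∅

def Fm.noCap : Fm → (Tm → Tm) → Prop
  | .and A B, f => A.noCap f ∧ B.noCap f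
  | .or A B, f => A.noCap f ∧ B.noCap f
  | .imp A B, f => A.noCap f ∧ B.noCap f
  | .all x A, f => (∀ s ∈ A.ter, s ≠ Tm.var x → f s ≠ Tm.var x) ∧
      A.noCap (Function.update f (Tm.var x) (Tm.var x))
  | .ex x A, f => (∀ s ∈ A.ter, s ≠ Tm.var x → f s ≠ Tm.var x) ∧
      A.noCap (Function.update f (Tm.var x) (Tm.var x))
  | _, _ => True

def GoodR (f : Tm → Tm) (B : Finset ℕ) : Prop :=
  ∀ t, f t = t ∨ ∃ z, f t = Tm.var z ∧ z ∉ B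

theorem ren_congr (A : Fm) : ∀ (f g : Tm → Tm), (∀ s ∈ A.ter, f s = g s) → A.ren f = A.ren g := by
  induction A with
  | rel r ts => intro f g h; simp [Fm.ren, Fm.ter] at *; exact h
  | eq a b => intro f g h; simp [Fm.ren, Fm.ter] at *; exact h
  | bot => intros; rfl
  | top => intros; rfl
  | and A B ihA ihB | or A B ihA ihB | imp A B ihA ihB =>
    intro f g h
    simp only [Fm.ren, Fm.ter, Finset.mem_union] at *
    rw [ihA f g (fun s hs => h s (Or.inl hs)), ihB f g (fun s hs => h s (Or.inr hs))]
  | all x A ih | ex x A ih =>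
    intro f g h
    simp only [Fm.ren, Fm.ter, Finset.mem_erase] at *
    rw [ih]
    intro s hs
    by_cases hx : s = Tm.var x
    · subst hx; simp
    · simp [Function.update_of_ne hx, h s ⟨hx, hs⟩]

theorem upd_id (x : ℕ) : Function.update (id : Tm → Tm) (Tm.var x) (Tm.var x) = id := by
  exact Function.update_eq_self (Tm.var x) (id : Tm → Tm)

theorem ren_id (A : Fm) : A.ren id = A := by
  induction A <;> simp_all [Fm.ren, upd_id]

theorem ren_eq_self (A : Fm) (f : Tm → Tm) (h : ∀ s ∈ A.ter, f s = s) : A.ren f = A := by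
  rw [ren_congr A f id h, ren_id]

theorem subst_eq_ren (A : Fm) (u t : Tm) : A.subst u t = A.ren (Function.update id u t) := by
  have key : ∀ s : Tm, s.subst u t = Function.update id u t s := by
    intro s; by_cases h : s = u
    · subst h; simp [Tm.subst]
    · simp [Tm.subst, h]
  induction A with
  | rel r ts => simp [Fm.subst, Fm.ren, key]
  | eq a b => simp [Fm.subst, Fm.ren, key]
  | bot => rfl
  | top => rfl
  | and A B ihA ihB | or A B ihA ihB | imp A B ihA ihB => simp [Fm.subst, Fm.ren, ihA, ihB]
  | all x A ih | ex x A ih =>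
    by_cases h : u = Tm.var x
    · subst h; simp [Fm.subst, Fm.ren, upd_id, ren_id]
    · simp only [Fm.subst, h, if_false, Fm.ren, ih]
      congr 2
      rw [eq_comm, Function.update_eq_self_iff, Function.update_of_ne (Ne.symm h)]; rfl

theorem ren_ren (A : Fm) : ∀ (f g : Tm → Tm), A.noCap f → (A.ren f).ren g = A.ren (g ∘ f) := by
  induction A with
  | rel r ts => intros; simp [Fm.ren]
  | eq a b => intros; simp [Fm.ren]
  | bot => intros; rfl
  | top => intros; rfl
  | and A B ihA ihB | or A B ihA ihB | imp A B ihA ihB =>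
    intro f g h; simp [Fm.ren, ihA f g h.1, ihB f g h.2]
  | all x A ih | ex x A ih =>
    intro f g h
    simp only [Fm.ren]
    rw [ih _ _ h.2]
    congr 1
    apply ren_congr
    intro s hs
    by_cases hx : s = Tm.var x
    · subst hx; simp
    · simp [Function.update_of_ne hx, Function.update_of_ne (h.1 s hs hx)]

theorem ter_ren (A : Fm) : ∀ (f : Tm → Tm), ∀ s ∈ (A.ren f).ter, ∃ t ∈ A.ter, f t = s := by
  induction A with
  | rel r ts => intro f s; simp [Fm.ren, Fm.ter]
  | eq a b => intro f s; simp [Fm.ren, Fm.ter, eq_comm]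
  | bot => intro f s; simp [Fm.ren, Fm.ter]
  | top => intro f s; simp [Fm.ren, Fm.ter]
  | and A B ihA ihB | or A B ihA ihB | imp A B ihA ihB =>
    intro f s hs
    simp only [Fm.ren, Fm.ter, Finset.mem_union] at *
    rcases hs with hs | hs
    · obtain ⟨t, ht, e⟩ := ihA f s hs; exact ⟨t, Or.inl ht, e⟩
    · obtain ⟨t, ht, e⟩ := ihB f s hs; exact ⟨t, Or.inr ht, e⟩
  | all x A ih | ex x A ih =>
    intro f s hs
    simp only [Fm.ren, Fm.ter, Finset.mem_erase] at *
    obtain ⟨t, ht, e⟩ := ih _ s hs.2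
    by_cases hx : t = Tm.var x
    · subst hx; simp at e; exact absurd e.symm hs.1
    · rw [Function.update_of_ne hx] at e; exact ⟨t, ⟨hx, ht⟩, e⟩

theorem bv_ren (A : Fm) : ∀ f, (A.ren f).bv = A.bv := by
  induction A <;> simp_all [Fm.ren, Fm.bv]

theorem rels_ren (A : Fm) : ∀ f, (A.ren f).rels = A.rels := by
  induction A <;> simp_all [Fm.ren, Fm.rels]

theorem rels_subst (A : Fm) (u t : Tm) : (A.subst u t).rels = A.rels := by
  rw [subst_eq_ren, rels_ren]

theorem bv_subst (A : Fm) (u t : Tm) : (A.subst u t).bv = A.bv := by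
  rw [subst_eq_ren, bv_ren]

theorem GoodR.upd {f : Tm → Tm} {B : Finset ℕ} (h : GoodR f B) (x : ℕ) :
    GoodR (Function.update f (Tm.var x) (Tm.var x)) B := by
  intro t
  by_cases hx : t = Tm.var x
  · subst hx; simp
  · rw [Function.update_of_ne hx]; exact h t

theorem noCap_of_good (A : Fm) : ∀ (f : Tm → Tm) (B : Finset ℕ), A.bv ⊆ B → GoodR f B →
    A.noCap f := by
  induction A with
  | rel r ts => intros; trivial
  | eq a b => intros; trivial
  | bot => intros; trivial
  | top => intros; trivial
  | and A B ihA ihB | or A B ihA ihB | imp A B ihA ihB =>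
    intro f S h hf
    simp only [Fm.bv, Finset.union_subset_iff] at h
    exact ⟨ihA f S h.1 hf, ihB f S h.2 hf⟩
  | all x A ih | ex x A ih =>
    intro f S h hf
    simp only [Fm.bv, Finset.insert_subset_iff] at h
    refine ⟨fun s _ hs e => ?_, ih _ S h.2 (hf.upd x)⟩
    rcases hf s with h1 | ⟨z, h1, h2⟩
    · exact hs (h1 ▸ e)
    · rw [e] at h1; cases h1; exact h2 h.1

theorem noCap_of_freeFor (A : Fm) (t u : Tm) : A.freeFor t u →
    A.noCap (Function.update id u t) := by
  have idc : ∀ A : Fm, A.noCap id := by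
    intro A
    induction A <;> simp_all [Fm.noCap, upd_id]
  have nin : ∀ (A : Fm) (f g : Tm → Tm), (∀ s ∈ A.ter, f s = g s) → A.noCap f → A.noCap g := by
    intro A
    induction A with
    | rel r ts => intros; trivial
    | eq a b => intros; trivial
    | bot => intros; trivial
    | top => intros; trivial
    | and A B ihA ihB | or A B ihA ihB | imp A B ihA ihB =>
      intro f g h hf
      simp only [Fm.ter, Finset.mem_union] at h
      exact ⟨ihA f g (fun s hs => h s (Or.inl hs)) hf.1, ihB f g (fun s hs => h s (Or.inr hs)) hf.2⟩
    | all x A ih | ex x A ih =>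
      intro f g h hf
      simp only [Fm.ter, Finset.mem_erase] at h
      refine ⟨fun s hs hx => h s ⟨hx, hs⟩ ▸ hf.1 s hs hx, ih _ _ ?_ hf.2⟩
      intro s hs
      by_cases hx : s = Tm.var x
      · subst hx; simp
      · simp [Function.update_of_ne hx, h s ⟨hx, hs⟩]
  induction A with
  | rel r ts => intros; trivial
  | eq a b => intros; trivial
  | bot => intros; trivial
  | top => intros; trivial
  | and A B ihA ihB | or A B ihA ihB | imp A B ihA ihB =>
    intro h; exact ⟨ihA h.1, ihB h.2⟩
  | all x A ih | ex x A ih =>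
    intro h
    by_cases hu : u = Tm.var x
    · subst hu
      refine ⟨fun s _ hx => by simpa [Function.update_of_ne hx] using hx, ?_⟩
      simp [upd_id, idc]
    rcases h with h | h
    · refine nin _ id _ ?_ (idc _)
      intro s hs
      rw [Function.update_of_ne]
      rintro rfl; exact h hs
    · have e : Function.update (Function.update (id : Tm → Tm) u t) (Tm.var x) (Tm.var x)
          = Function.update id u t := by
        rw [Function.update_eq_self_iff, Function.update_of_ne (Ne.symm hu)]; rfl
      refine ⟨fun s _ hx => ?_, by rw [e]; exact ih h.2⟩
      by_cases hs : s = u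
      · subst hs; simpa using h.1
      · simpa [Function.update_of_ne hs] using hx

theorem freeFor_of_bv (A : Fm) (z : ℕ) (u : Tm) (h : z ∉ A.bv) : A.freeFor (Tm.var z) u := by
  induction A <;> simp_all [Fm.bv, Fm.freeFor]

theorem freeFor_ren (A : Fm) (t : Tm) (x : ℕ) : ∀ f : Tm → Tm,
    (∀ s, f s = Tm.var x → s = Tm.var x) → A.freeFor t (Tm.var x) →
    (A.ren f).freeFor t (Tm.var x) := by
  induction A with
  | rel r ts => intros; trivial
  | eq a b => intros; trivial
  | bot => intros; trivial
  | top => intros; trivial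
  | and A B ihA ihB | or A B ihA ihB | imp A B ihA ihB =>
    intro f hf h; exact ⟨ihA f hf h.1, ihB f hf h.2⟩
  | all w A ih | ex w A ih =>
    intro f hf h
    rcases h with h | h
    · left
      intro h'
      obtain ⟨s, hs, e⟩ := ter_ren A _ _ (Finset.mem_of_mem_erase h')
      by_cases hw : s = Tm.var w
      · subst hw
        rw [Function.update_self] at e
        exact (Finset.ne_of_mem_erase h') e.symm
      · rw [Function.update_of_ne hw] at e
        have := hf s e
        subst this
        exact h (Finset.mem_erase.2 ⟨hw, hs⟩)
    · by_cases hw : x = w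
      · subst hw; left; simp [Fm.ter]
      · right
        refine ⟨h.1, ih _ ?_ h.2⟩
        intro s e
        by_cases hs : s = Tm.var w
        · subst hs; simpa using e
        · rw [Function.update_of_ne hs] at e; exact hf s e

theorem good_inv {f : Tm → Tm} {B : Finset ℕ} (h : GoodR f B) {x : ℕ} (hx : x ∈ B) (s : Tm)
    (e : f s = Tm.var x) : s = Tm.var x := by
  rcases h s with h1 | ⟨z, h1, h2⟩
  · rw [← h1, e]
  · rw [e] at h1; cases h1; exact absurd hx h2

theorem subst_ren_comm (A : Fm) (t : Tm) (x : ℕ) (f : Tm → Tm) (B : Finset ℕ) (hx : x ∈ B)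
    (hA : A.bv ⊆ B) (hf : GoodR f B) (hfree : A.freeFor t (Tm.var x)) :
    (A.subst (Tm.var x) t).ren f =
      (A.ren (Function.update f (Tm.var x) (Tm.var x))).subst (Tm.var x) (f t) := by
  rw [subst_eq_ren, subst_eq_ren, ren_ren _ _ _ (noCap_of_freeFor _ _ _ hfree),
    ren_ren _ _ _ (noCap_of_good _ _ _ hA (hf.upd x))]
  apply ren_congr
  intro s _
  by_cases hs : s = Tm.var x
  · subst hs; simp
  · have : f s ≠ Tm.var x := fun e => hs (good_inv hf hx s e)
    simp [Function.update_of_ne hs, Function.update_of_ne this]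

theorem freeFor_ren_good (A : Fm) (t : Tm) (x : ℕ) (f : Tm → Tm) (B : Finset ℕ) (hx : x ∈ B)
    (hA : A.bv ⊆ B) (hf : GoodR f B) (hfree : A.freeFor t (Tm.var x)) :
    (A.ren (Function.update f (Tm.var x) (Tm.var x))).freeFor (f t) (Tm.var x) := by
  rcases hf t with h1 | ⟨z, h1, h2⟩
  · rw [h1]
    exact freeFor_ren _ _ _ _ (good_inv (hf.upd x) hx) hfree
  · rw [h1]
    apply freeFor_of_bv
    rw [bv_ren]; exact fun h => h2 (hA h)

theorem mem_terM {t : Tm} {M : Multiset Fm} : t ∈ terM M ↔ ∃ A ∈ M, t ∈ A.ter := by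
  induction M using Multiset.induction_on with
  | empty => simp [terM]
  | cons a s ih => simp only [terM] at ih; simp [terM, ih]

def relsM (M : Multiset Fm) : Finset ℕ := (M.map Fm.rels).sup

theorem mem_relsM {r : ℕ} {M : Multiset Fm} : r ∈ relsM M ↔ ∃ A ∈ M, r ∈ A.rels := by
  induction M using Multiset.induction_on with
  | empty => simp [relsM]
  | cons a s ih => simp only [relsM] at ih; simp [relsM, ih]

theorem mem_langM {t : Tm ⊕ ℕ} {M : Multiset Fm} : t ∈ langM M ↔ ∃ A ∈ M, t ∈ A.lang := by
  induction M using Multiset.induction_on with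
  | empty => simp [langM]
  | cons a s ih => simp only [langM] at ih; simp [langM, ih]

theorem terM_cons (A : Fm) (M : Multiset Fm) : terM (A ::ₘ M) = A.ter ∪ terM M := by
  simp [terM]

theorem terM_add (M N : Multiset Fm) : terM (M + N) = terM M ∪ terM N := by
  simp [terM]

theorem relsM_cons (A : Fm) (M : Multiset Fm) : relsM (A ::ₘ M) = A.rels ∪ relsM M := by
  simp [relsM]

theorem relsM_add (M N : Multiset Fm) : relsM (M + N) = relsM M ∪ relsM N := by
  simp [relsM]

theorem exists_fresh (B : Finset ℕ) (S : Finset Tm) : ∃ z, z ∉ B ∧ Tm.var z ∉ S := by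
  have inj : Function.Injective Tm.var := fun a b h => by cases h; rfl
  obtain ⟨z, hz⟩ := Infinite.exists_notMem_finset (B ∪ S.preimage Tm.var inj.injOn)
  refine ⟨z, ?_, ?_⟩
  · intro h; exact hz (Finset.mem_union_left _ h)
  · intro h; exact hz (Finset.mem_union_right _ (by simpa using h))

theorem mem_foldr_consts (ts : List Tm) (h : ts.foldr (fun t s => t.consts ∪ s) ∅ = ∅) :
    ∀ t ∈ ts, t.consts = ∅ := by
  induction ts with
  | nil => simp
  | cons a l ih => simp_all [Finset.union_eq_empty]

theorem applyσ_ren (P : Fm) (hP : P.isAtom) (hc : P.consts = ∅) (σ : ℕ → Tm) (g : Tm → Tm) :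
    (P.applyσ σ).ren g = P.applyσ (g ∘ σ) := by
  have key : ∀ t : Tm, t.consts = ∅ → g (t.applyσ σ) = t.applyσ (g ∘ σ) := by
    intro t ht
    cases t with
    | var x => rfl
    | const c => simp [Tm.consts] at ht
  cases P with
  | rel r ts =>
    simp only [Fm.applyσ, Fm.ren, List.map_map, Fm.rel.injEq, true_and]
    apply List.map_congr_left
    intro t ht
    exact key t (mem_foldr_consts ts hc t ht)
  | eq a b =>
    simp only [Fm.consts, Finset.union_eq_empty] at hc
    simp [Fm.applyσ, Fm.ren, key a hc.1, key b hc.2]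
  | bot => rfl
  | top => rfl
  | _ => exact hP.elim

theorem applyσ_atom (P : Fm) (hP : P.isAtom) (σ : ℕ → Tm) : (P.applyσ σ).isAtom := by
  cases P <;> simp_all [Fm.applyσ, Fm.isAtom]

theorem rels_applyσ (P : Fm) (σ : ℕ → Tm) : (P.applyσ σ).rels = P.rels := by
  induction P <;> simp_all [Fm.applyσ, Fm.rels]

theorem atom_bv (P : Fm) (hP : P.isAtom) : P.bv = ∅ := by
  cases P <;> simp_all [Fm.bv, Fm.isAtom]

theorem mem_relsL {r : ℕ} {L : List Fm} : r ∈ relsL L ↔ ∃ A ∈ L, r ∈ A.rels := by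
  induction L with
  | nil => simp [relsL]
  | cons a s ih => simp only [relsL] at ih; simp [relsL, ih]

theorem der_mono {Rs : Set GeomRule} {n : ℕ} {Γ Δ : Multiset Fm} (h : DerG Rs n Γ Δ) :
    ∀ m, n ≤ m → DerG Rs m Γ Δ := by
  induction h with
  | ax h => intros; exact .ax h
  | botL => intros; exact .botL
  | topR => intros; exact .topR
  | andL _ ih => rintro (_ | m) hm; · omega
                 exact .andL (ih m (by omega))
  | andR _ _ ih ih2 => rintro (_ | m) hm; · omega
                       exact .andR (ih m (by omega)) (ih2 m (by omega))
  | orL _ _ ih ih2 => rintro (_ | m) hm; · omega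
                      exact .orL (ih m (by omega)) (ih2 m (by omega))
  | orR _ ih => rintro (_ | m) hm; · omega
                exact .orR (ih m (by omega))
  | impL _ _ ih ih2 => rintro (_ | m) hm; · omega
                       exact .impL (ih m (by omega)) (ih2 m (by omega))
  | impR _ ih => rintro (_ | m) hm; · omega
                 exact .impR (ih m (by omega))
  | allL hf _ ih => rintro (_ | m) hm; · omega
                    exact .allL hf (ih m (by omega))
  | allR hf hy _ ih => rintro (_ | m) hm; · omega
                       exact .allR hf hy (ih m (by omega))
  | exL hf hy _ ih => rintro (_ | m) hm; · omega
                      exact .exL hf hy (ih m (by omega))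
  | exR hf _ ih => rintro (_ | m) hm; · omega
                   exact .exR hf (ih m (by omega))
  | geom hR hf _ ih => rintro (_ | m) hm; · omega
                       exact .geom hR hf (fun q hq => ih q hq m (by omega))

theorem map_ren_congr (M : Multiset Fm) (f g : Tm → Tm) (h : ∀ s ∈ terM M, f s = g s) :
    M.map (fun A => A.ren f) = M.map (fun A => A.ren g) := by
  apply Multiset.map_congr rfl
  intro A hA
  exact ren_congr A f g (fun s hs => h s (mem_terM.2 ⟨A, hA, hs⟩))

theorem map_ren_self (M : Multiset Fm) (f : Tm → Tm) (h : ∀ s ∈ terM M, f s = s) :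
    M.map (fun A => A.ren f) = M := by
  rw [map_ren_congr M f id h]; simp [ren_id]

theorem GoodR.updv {f : Tm → Tm} {B : Finset ℕ} (h : GoodR f B) (u : Tm) {z : ℕ} (hz : z ∉ B) :
    GoodR (Function.update f u (Tm.var z)) B := by
  intro t
  by_cases hx : t = u
  · subst hx; right; exact ⟨z, by simp, hz⟩
  · rw [Function.update_of_ne hx]; exact h t

theorem inst_ren (R : GeomRule) (hs : R.Singular) (σ : ℕ → Tm) (g : Tm → Tm) :
    (R.inst σ).map (fun A => A.ren g) = R.inst (g ∘ σ) := by
  simp only [GeomRule.inst, Multiset.map_coe, List.map_map]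
  congr 1
  apply List.map_congr_left
  intro P hP
  exact applyσ_ren P (R.atomP P hP) (hs.1 P hP) σ g

theorem eigen_ren (A : Fm) (x y y' : ℕ) (f : Tm → Tm) (B : Finset ℕ) (hx : x ∈ B)
    (hA : A.bv ⊆ B) (hf : GoodR f B) (hfree : A.freeFor (Tm.var y) (Tm.var x)) (hy' : y' ∉ B)
    (hy : Tm.var y ∉ A.ter.erase (Tm.var x)) :
    (A.subst (Tm.var x) (Tm.var y)).ren (Function.update f (Tm.var y) (Tm.var y')) =
     (A.ren (Function.update f (Tm.var x) (Tm.var x))).subst (Tm.var x) (Tm.var y') := by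
  rw [subst_ren_comm A _ x _ B hx hA (hf.updv _ hy') hfree]
  rw [Function.update_self]
  congr 1
  apply ren_congr
  intro s hs
  by_cases h1 : s = Tm.var x
  · subst h1; simp
  · rw [Function.update_of_ne h1, Function.update_of_ne h1, Function.update_of_ne]
    rintro rfl
    exact hy (Finset.mem_erase.2 ⟨h1, hs⟩)

theorem der_struct {Rs : Set GeomRule} (hsing : ∀ R ∈ Rs, R.Singular) {n : ℕ}
    {Γ Δ : Multiset Fm} (h : DerG Rs n Γ Δ) :
    ∀ (B : Finset ℕ) (f : Tm → Tm), (∀ A ∈ Γ, A.bv ⊆ B) → (∀ A ∈ Δ, A.bv ⊆ B) → GoodR f B →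
    ∀ Γ' Δ', DerG Rs n (Γ.map (fun A => A.ren f) + Γ') (Δ.map (fun A => A.ren f) + Δ') := by
  induction h with
  | @ax n P Γ Δ h =>
    intro B f _ _ _ Γ' Δ'
    simp only [Multiset.map_cons, Multiset.cons_add]
    apply DerG.ax
    cases P <;> simp_all [Fm.isAtom, Fm.ren]
  | botL =>
    intro B f _ _ _ Γ' Δ'
    simp only [Multiset.map_cons, Multiset.cons_add, Fm.ren]; exact .botL
  | topR =>
    intro B f _ _ _ Γ' Δ'
    simp only [Multiset.map_cons, Multiset.cons_add, Fm.ren]; exact .topR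
  | andL _ ih =>
    intro B f h1 h2 hf Γ' Δ'
    simp only [Multiset.map_cons, Multiset.cons_add, Fm.ren, Multiset.forall_mem_cons, Fm.bv,
      Finset.union_subset_iff] at *
    exact .andL (ih B f ⟨h1.1.1, h1.1.2, h1.2⟩ h2 hf Γ' Δ')
  | andR _ _ ih ih2 =>
    intro B f h1 h2 hf Γ' Δ'
    simp only [Multiset.map_cons, Multiset.cons_add, Fm.ren, Multiset.forall_mem_cons, Fm.bv,
      Finset.union_subset_iff] at *
    exact .andR (ih B f h1 ⟨h2.1.1, h2.2⟩ hf Γ' Δ') (ih2 B f h1 ⟨h2.1.2, h2.2⟩ hf Γ' Δ')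
  | orL _ _ ih ih2 =>
    intro B f h1 h2 hf Γ' Δ'
    simp only [Multiset.map_cons, Multiset.cons_add, Fm.ren, Multiset.forall_mem_cons, Fm.bv,
      Finset.union_subset_iff] at *
    exact .orL (ih B f ⟨h1.1.1, h1.2⟩ h2 hf Γ' Δ') (ih2 B f ⟨h1.1.2, h1.2⟩ h2 hf Γ' Δ')
  | orR _ ih =>
    intro B f h1 h2 hf Γ' Δ'
    simp only [Multiset.map_cons, Multiset.cons_add, Fm.ren, Multiset.forall_mem_cons, Fm.bv,
      Finset.union_subset_iff] at *
    exact .orR (ih B f h1 ⟨h2.1.1, h2.1.2, h2.2⟩ hf Γ' Δ')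
  | impL _ _ ih ih2 =>
    intro B f h1 h2 hf Γ' Δ'
    simp only [Multiset.map_cons, Multiset.cons_add, Fm.ren, Multiset.forall_mem_cons, Fm.bv,
      Finset.union_subset_iff] at *
    exact .impL (ih B f h1.2 ⟨h1.1.1, h2⟩ hf Γ' Δ') (ih2 B f ⟨h1.1.2, h1.2⟩ h2 hf Γ' Δ')
  | impR _ ih =>
    intro B f h1 h2 hf Γ' Δ'
    simp only [Multiset.map_cons, Multiset.cons_add, Fm.ren, Multiset.forall_mem_cons, Fm.bv,
      Finset.union_subset_iff] at *
    exact .impR (ih B f ⟨h2.1.1, h1⟩ ⟨h2.1.2, h2.2⟩ hf Γ' Δ')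
  | allL hfree _ ih =>
    intro B f h1 h2 hf Γ' Δ'
    simp only [Multiset.map_cons, Multiset.cons_add, Fm.ren, Multiset.forall_mem_cons, Fm.bv,
      Finset.insert_subset_iff, bv_subst] at *
    have := ih B f ⟨h1.1.2, h1⟩ h2 hf Γ' Δ'
    rw [subst_ren_comm _ _ _ _ B h1.1.1 h1.1.2 hf hfree] at this
    exact .allL (freeFor_ren_good _ _ _ _ B h1.1.1 h1.1.2 hf hfree) this
  | exR hfree _ ih =>
    intro B f h1 h2 hf Γ' Δ'
    simp only [Multiset.map_cons, Multiset.cons_add, Fm.ren, Multiset.forall_mem_cons, Fm.bv,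
      Finset.insert_subset_iff, bv_subst] at *
    have := ih B f h1 ⟨h2.1, h2.1.2, h2.2⟩ hf Γ' Δ'
    rw [subst_ren_comm _ _ _ _ B h2.1.1 h2.1.2 hf hfree] at this
    exact .exR (freeFor_ren_good _ _ _ _ B h2.1.1 h2.1.2 hf hfree) this
  | @allR n x y A Γ Δ hfree hy _ ih =>
    intro B f h1 h2 hf Γ' Δ'
    simp only [Multiset.map_cons, Multiset.cons_add, Multiset.forall_mem_cons, Fm.bv,
      Finset.insert_subset_iff, bv_subst, Fm.ter, Finset.mem_union, not_or] at *
    obtain ⟨y', hyB, hyS⟩ := exists_fresh B (terM (Γ.map (fun A => A.ren f) + Γ') ∪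
      terM (Δ.map (fun A => A.ren f) + Δ') ∪ ((Fm.all x A).ren f).ter)
    have := ih B (Function.update f (Tm.var y) (Tm.var y')) h1 ⟨h2.1.2, h2.2⟩
      (hf.updv _ hyB) Γ' Δ'
    rw [eigen_ren A x y y' f B h2.1.1 h2.1.2 hf hfree hyB hy.2,
      map_ren_congr Γ _ f, map_ren_congr Δ _ f] at this
    · exact .allR (freeFor_of_bv _ _ _ (by rw [bv_ren]; exact fun h => hyB (h2.1.2 h))) hyS this
    · intro s hs; rw [Function.update_of_ne]; rintro rfl; exact hy.1.2 hs
    · intro s hs; rw [Function.update_of_ne]; rintro rfl; exact hy.1.1 hs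
  | @exL n x y A Γ Δ hfree hy _ ih =>
    intro B f h1 h2 hf Γ' Δ'
    simp only [Multiset.map_cons, Multiset.cons_add, Multiset.forall_mem_cons, Fm.bv,
      Finset.insert_subset_iff, bv_subst, Fm.ter, Finset.mem_union, not_or] at *
    obtain ⟨y', hyB, hyS⟩ := exists_fresh B (terM (Γ.map (fun A => A.ren f) + Γ') ∪
      terM (Δ.map (fun A => A.ren f) + Δ') ∪ ((Fm.ex x A).ren f).ter)
    have := ih B (Function.update f (Tm.var y) (Tm.var y')) ⟨h1.1.2, h1.2⟩ h2
      (hf.updv _ hyB) Γ' Δ'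
    rw [eigen_ren A x y y' f B h1.1.1 h1.1.2 hf hfree hyB hy.2,
      map_ren_congr Γ _ f, map_ren_congr Δ _ f] at this
    · exact .exL (freeFor_of_bv _ _ _ (by rw [bv_ren]; exact fun h => hyB (h1.1.2 h))) hyS this
    · intro s hs; rw [Function.update_of_ne]; rintro rfl; exact hy.1.2 hs
    · intro s hs; rw [Function.update_of_ne]; rintro rfl; exact hy.1.1 hs
  | @geom n R σ Γ Δ hR hfresh _ ih =>
    intro B f h1 h2 hf Γ' Δ'
    obtain ⟨y', hyB, hyS⟩ := exists_fresh B (terM ((R.inst σ + Γ).map (fun A => A.ren f) + Γ') ∪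
      terM (Δ.map (fun A => A.ren f) + Δ'))
    classical
    let g : Tm → Tm := fun s => if ∃ q ∈ R.QYs, σ q.2 = s then Tm.var y' else f s
    have hg : GoodR g B := by
      intro t
      by_cases h : ∃ q ∈ R.QYs, σ q.2 = t
      · right; exact ⟨y', by simp only [g]; rw [if_pos h], hyB⟩
      · simp only [g]; rw [if_neg h]; exact hf t
    have agree : ∀ s, s ∈ terM (R.inst σ + Γ) ∪ terM Δ → g s = f s := by
      intro s hs
      simp only [g]; rw [if_neg]
      rintro ⟨q, hq, e⟩
      obtain ⟨z, hz, hz'⟩ := hfresh q hq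
      rw [← e, hz] at hs; exact hz' hs
    have eΓ : (R.inst σ + Γ).map (fun A => A.ren f) = R.inst (g ∘ σ) + Γ.map (fun A => A.ren g) := by
      rw [← map_ren_congr _ g f (fun s hs => agree s (Finset.mem_union_left _ hs)),
        Multiset.map_add, inst_ren R (hsing R hR)]
    have eΔ : Δ.map (fun A => A.ren f) = Δ.map (fun A => A.ren g) :=
      (map_ren_congr _ g f (fun s hs => agree s (Finset.mem_union_right _ hs))).symm
    rw [eΓ, eΔ, add_assoc] at hyS ⊢
    refine .geom hR ?_ ?_
    · intro q hq
      exact ⟨y', by simp only [g, Function.comp]; rw [if_pos ⟨q, hq, rfl⟩], hyS⟩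
    · intro q hq
      have := ih q hq B g ?_ h2 hg Γ' Δ'
      · rw [Multiset.map_cons, Multiset.map_add, inst_ren R (hsing R hR), Multiset.cons_add,
          applyσ_ren _ (R.atomQ q hq) ((hsing R hR).2.1 q hq), add_assoc] at this
        exact this
      · rw [Multiset.forall_mem_cons]
        refine ⟨?_, h1⟩
        rw [atom_bv _ (applyσ_atom _ (R.atomQ q hq) σ)]; simp

theorem exists_bvM (M : Multiset Fm) : ∃ B : Finset ℕ, ∀ A ∈ M, A.bv ⊆ B := by
  induction M using Multiset.induction_on with
  | empty => exact ⟨∅, by simp⟩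
  | cons a s ih =>
    obtain ⟨B, hB⟩ := ih
    refine ⟨a.bv ∪ B, ?_⟩
    rw [Multiset.forall_mem_cons]
    exact ⟨Finset.subset_union_left, fun A hA => (hB A hA).trans Finset.subset_union_right⟩

theorem der_weak {Rs : Set GeomRule} (hsing : ∀ R ∈ Rs, R.Singular) {n : ℕ}
    {Γ Δ : Multiset Fm} (h : DerG Rs n Γ Δ) (Γ' Δ' : Multiset Fm) :
    DerG Rs n (Γ + Γ') (Δ + Δ') := by
  obtain ⟨B, hB⟩ := exists_bvM (Γ + Δ)
  have := der_struct hsing h B id (fun A hA => hB A (Multiset.mem_add.2 (Or.inl hA)))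
    (fun A hA => hB A (Multiset.mem_add.2 (Or.inr hA))) (fun t => Or.inl rfl) Γ' Δ'
  simpa [ren_id] using this

section
variable {Rs : Set GeomRule} {Γ Δ Γ₁ Γ₂ Δ₁ Δ₂ : Multiset Fm} {A B C : Fm}

theorem Derivable.weak (hsing : ∀ R ∈ Rs, R.Singular) (h : Derivable Rs Γ Δ)
    {Γ' Δ' : Multiset Fm} (h1 : Γ ≤ Γ') (h2 : Δ ≤ Δ') : Derivable Rs Γ' Δ' := by
  obtain ⟨n, h⟩ := h
  obtain ⟨u, rfl⟩ := Multiset.le_iff_exists_add.1 h1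
  obtain ⟨v, rfl⟩ := Multiset.le_iff_exists_add.1 h2
  exact ⟨n, der_weak hsing h _ _⟩

theorem dOrL (h1 : Derivable Rs (A ::ₘ Γ) Δ) (h2 : Derivable Rs (B ::ₘ Γ) Δ) :
    Derivable Rs (Fm.or A B ::ₘ Γ) Δ := by
  obtain ⟨n, h1⟩ := h1
  obtain ⟨m, h2⟩ := h2
  exact ⟨_, .orL (der_mono h1 (max n m) (by simp)) (der_mono h2 (max n m) (by simp))⟩

theorem dAndR (h1 : Derivable Rs Γ (A ::ₘ Δ)) (h2 : Derivable Rs Γ (B ::ₘ Δ)) :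
    Derivable Rs Γ (Fm.and A B ::ₘ Δ) := by
  obtain ⟨n, h1⟩ := h1
  obtain ⟨m, h2⟩ := h2
  exact ⟨_, .andR (der_mono h1 (max n m) (by simp)) (der_mono h2 (max n m) (by simp))⟩

theorem dImpL (h1 : Derivable Rs Γ (A ::ₘ Δ)) (h2 : Derivable Rs (B ::ₘ Γ) Δ) :
    Derivable Rs (Fm.imp A B ::ₘ Γ) Δ := by
  obtain ⟨n, h1⟩ := h1
  obtain ⟨m, h2⟩ := h2
  exact ⟨_, .impL (der_mono h1 (max n m) (by simp)) (der_mono h2 (max n m) (by simp))⟩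

theorem dGeom {R : GeomRule} {σ : ℕ → Tm} (hR : R ∈ Rs)
      (hfresh : ∀ q ∈ R.QYs, ∃ z : ℕ, σ q.2 = Tm.var z ∧
          Tm.var z ∉ terM (R.inst σ + Γ) ∪ terM Δ)
      (hprem : ∀ q ∈ R.QYs, Derivable Rs (Fm.applyσ σ q.1 ::ₘ (R.inst σ + Γ)) Δ) :
      Derivable Rs (R.inst σ + Γ) Δ := by
  have : ∀ L : List (Fm × ℕ), (∀ q ∈ L, Derivable Rs (Fm.applyσ σ q.1 ::ₘ (R.inst σ + Γ)) Δ) →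
      ∃ n, ∀ q ∈ L, DerG Rs n (Fm.applyσ σ q.1 ::ₘ (R.inst σ + Γ)) Δ := by
    intro L
    induction L with
    | nil => intro _; exact ⟨0, by simp⟩
    | cons a L ih =>
      intro h
      rw [List.forall_mem_cons] at h
      obtain ⟨n, hn⟩ := ih h.2
      obtain ⟨m, hm⟩ := h.1
      refine ⟨max n m, ?_⟩
      rw [List.forall_mem_cons]
      exact ⟨der_mono hm _ (by simp), fun q hq => der_mono (hn q hq) _ (by simp)⟩
  obtain ⟨n, hn⟩ := this _ hprem
  exact ⟨n + 1, .geom hR hfresh hn⟩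

/-- full interpolation -/
def Intp (Rs : Set GeomRule) (Γ₁ Γ₂ Δ₁ Δ₂ : Multiset Fm) : Prop :=
  ∃ C, Derivable Rs Γ₁ (C ::ₘ Δ₁) ∧ Derivable Rs (C ::ₘ Γ₂) Δ₂ ∧
    (∀ t ∈ C.ter, t ∈ terM Γ₁ ∪ terM Δ₁) ∧ (∀ t ∈ C.ter, t ∈ terM Γ₂ ∪ terM Δ₂) ∧
    (∀ r ∈ C.rels, r ∈ relsM Γ₁ ∪ relsM Δ₁) ∧ (∀ r ∈ C.rels, r ∈ relsM Γ₂ ∪ relsM Δ₂)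

theorem Intp.symm (hsing : ∀ R ∈ Rs, R.Singular) (h : Intp Rs Γ₁ Γ₂ Δ₁ Δ₂) :
    Intp Rs Γ₂ Γ₁ Δ₂ Δ₁ := by
  obtain ⟨C, h1, h2, h3, h4, h5, h6⟩ := h
  refine ⟨.imp C .bot, ?_, ?_, by simpa [Fm.ter] using h4, by simpa [Fm.ter] using h3,
    by simpa [Fm.rels] using h6, by simpa [Fm.rels] using h5⟩
  · obtain ⟨n, hn⟩ := h2.weak hsing le_rfl (Multiset.le_cons_self _ Fm.bot)
    exact ⟨_, .impR hn⟩
  · exact dImpL h1 ⟨0, .botL⟩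

theorem freeFor_back (C : Fm) (t : Tm) (z : ℕ) (hz : z ∉ C.bv) (hz' : Tm.var z ∉ C.ter) :
    (C.subst t (Tm.var z)).freeFor t (Tm.var z) := by
  induction C with
  | rel r ts => trivial
  | eq a b => trivial
  | bot => trivial
  | top => trivial
  | and A B ihA ihB | or A B ihA ihB | imp A B ihA ihB =>
    simp only [Fm.bv, Fm.ter, Finset.mem_union, not_or] at hz hz'
    exact ⟨ihA hz.1 hz'.1, ihB hz.2 hz'.2⟩
  | all x A ih | ex x A ih =>
    simp only [Fm.bv, Finset.mem_insert, not_or] at hz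
    simp only [Fm.subst]
    by_cases h : t = Tm.var x
    · rw [if_pos h]; left; exact hz'
    · rw [if_neg h]; right
      refine ⟨h, ih hz.2 fun h' => hz' (Finset.mem_erase.2 ⟨?_, h'⟩)⟩
      intro e; cases e; exact hz.1 rfl

theorem good_id (B : Finset ℕ) : GoodR id B := fun _ => Or.inl rfl

theorem intp_gen (hsing : ∀ R ∈ Rs, R.Singular) (k : ℕ) : ∀ C : Fm,
    (C.ter \ (terM Γ₁ ∪ terM Δ₁)).card ≤ k → Derivable Rs Γ₁ (C ::ₘ Δ₁) →
    Derivable Rs (C ::ₘ Γ₂) Δ₂ → (∀ t ∈ C.ter, t ∈ terM Γ₂ ∪ terM Δ₂) →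
    (∀ r ∈ C.rels, r ∈ relsM Γ₁ ∪ relsM Δ₁) → (∀ r ∈ C.rels, r ∈ relsM Γ₂ ∪ relsM Δ₂) →
    Intp Rs Γ₁ Γ₂ Δ₁ Δ₂ := by
  induction k with
  | zero =>
    intro C hc h1 h2 h3 h4 h5
    refine ⟨C, h1, h2, ?_, h3, h4, h5⟩
    have : C.ter \ (terM Γ₁ ∪ terM Δ₁) = ∅ := by simpa using hc
    exact fun t ht => Finset.sdiff_eq_empty_iff_subset.1 this ht
  | succ k ih =>
    intro C hc h1 h2 h3 h4 h5
    by_cases he : C.ter \ (terM Γ₁ ∪ terM Δ₁) = ∅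
    · exact ⟨C, h1, h2, fun t ht => Finset.sdiff_eq_empty_iff_subset.1 he ht, h3, h4, h5⟩
    obtain ⟨t, ht⟩ := Finset.nonempty_iff_ne_empty.2 he
    obtain ⟨B, hB⟩ := exists_bvM (Γ₁ + (C ::ₘ Δ₁))
    obtain ⟨z, hzB, hzS⟩ := exists_fresh B (terM Γ₁ ∪ terM Δ₁ ∪ C.ter)
    simp only [Multiset.mem_add, Multiset.mem_cons] at hB
    simp only [Finset.mem_union, not_or] at hzS
    simp only [Finset.mem_sdiff, Finset.mem_union, not_or] at ht
    have hCB : C.bv ⊆ B := hB C (by simp)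
    have hzC : z ∉ C.bv := fun h => hzB (hCB h)
    have hgood := (good_id B).updv t hzB
    have hback : (C.subst t (Tm.var z)).subst (Tm.var z) t = C := by
      rw [subst_eq_ren, subst_eq_ren, ren_ren _ _ _ (noCap_of_good _ _ _ hCB hgood)]
      apply ren_eq_self
      intro s hs
      by_cases h : s = t
      · subst h; simp
      · have : s ≠ Tm.var z := by rintro rfl; exact hzS.2 hs
        simp [Function.update_of_ne h, Function.update_of_ne this]
    have hterD : (Fm.all z (C.subst t (Tm.var z))).ter ⊆ C.ter.erase t := by
      intro s hs
      simp only [Fm.ter, Finset.mem_erase, subst_eq_ren] at hs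
      obtain ⟨s', hs', e⟩ := ter_ren _ _ _ hs.2
      by_cases h : s' = t
      · subst h; simp at e; exact absurd e.symm hs.1
      · rw [Function.update_of_ne h] at e
        have e : s' = s := e
        subst e; exact Finset.mem_erase.2 ⟨h, hs'⟩
    have hrelD : (Fm.all z (C.subst t (Tm.var z))).rels = C.rels := rels_subst _ _ _
    refine ih (.all z (C.subst t (Tm.var z))) ?_ ?_ ?_
      (fun s hs => h3 s (Finset.mem_of_mem_erase (hterD hs))) (by rwa [hrelD]) (by rwa [hrelD])
    · have hlt : ((Fm.all z (C.subst t (Tm.var z))).ter \ (terM Γ₁ ∪ terM Δ₁)).card <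
          (C.ter \ (terM Γ₁ ∪ terM Δ₁)).card := by
        apply Finset.card_lt_card
        rw [Finset.ssubset_iff_of_subset
          (Finset.sdiff_subset_sdiff (hterD.trans (Finset.erase_subset _ _)) le_rfl)]
        refine ⟨t, by simp [ht], fun h => ?_⟩
        have := hterD (Finset.mem_sdiff.1 h).1
        simp at this
      omega
    · obtain ⟨n, hn⟩ := h1
      have := der_struct hsing hn B (Function.update id t (Tm.var z))
        (fun A hA => hB A (by simp [hA])) (fun A hA => hB A (by simpa using Or.inr (Multiset.mem_cons.1 hA)))
        hgood 0 0
      rw [add_zero, add_zero, Multiset.map_cons, ← subst_eq_ren, map_ren_self, map_ren_self] at this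
      · refine ⟨n + 1, .allR (y := z) (freeFor_of_bv _ _ _ (by rwa [bv_subst])) ?_ ?_⟩
        · simp [hzS, Fm.ter]
        · have e : (C.subst t (Tm.var z)).subst (Tm.var z) (Tm.var z) = C.subst t (Tm.var z) := by
            rw [subst_eq_ren _ (Tm.var z), upd_id, ren_id]
          rw [e]; exact this
      · intro s hs; rw [Function.update_of_ne]; · rfl
        rintro rfl; exact ht.2.2 hs
      · intro s hs; rw [Function.update_of_ne]; · rfl
        rintro rfl; exact ht.2.1 hs
    · obtain ⟨n, hn⟩ := h2.weak hsing (Γ' := C ::ₘ Fm.all z (C.subst t (Tm.var z)) ::ₘ Γ₂)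
        (Multiset.cons_le_cons _ (Multiset.le_cons_self _ _)) le_rfl
      refine ⟨n + 1, .allL (t := t) (freeFor_back C t z hzC hzS.2) ?_⟩
      rw [hback]; exact hn
end

theorem intp_combine {Rs : Set GeomRule} {Γ₂ Δ₂ : Multiset Fm} (hsing : ∀ R ∈ Rs, R.Singular)
    (L : List (Multiset Fm × Multiset Fm)) (h : ∀ s ∈ L, Intp Rs s.1 Γ₂ s.2 Δ₂) :
    ∃ C, (∀ s ∈ L, Derivable Rs s.1 (C ::ₘ s.2)) ∧ Derivable Rs (C ::ₘ Γ₂) Δ₂ ∧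
      (∀ t ∈ C.ter, t ∈ terM Γ₂ ∪ terM Δ₂) ∧ (∀ r ∈ C.rels, r ∈ relsM Γ₂ ∪ relsM Δ₂) ∧
      (∀ r ∈ C.rels, ∃ s ∈ L, r ∈ relsM s.1 ∪ relsM s.2) := by
  induction L with
  | nil => exact ⟨.bot, by simp, ⟨0, .botL⟩, by simp [Fm.ter], by simp [Fm.rels], by simp [Fm.rels]⟩
  | cons a L ih =>
    rw [List.forall_mem_cons] at h
    obtain ⟨C, c1, c2, c3, c4, c5⟩ := ih h.2
    obtain ⟨D, d1, d2, d3, d4, d5, d6⟩ := h.1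
    refine ⟨.or D C, ?_, dOrL d2 c2, ?_, ?_, ?_⟩
    · rw [List.forall_mem_cons]
      constructor
      · obtain ⟨n, hn⟩ := d1.weak hsing le_rfl
          (Multiset.cons_le_cons D (Multiset.le_cons_self _ C))
        exact ⟨_, .orR hn⟩
      · intro s hs
        obtain ⟨n, hn⟩ := (c1 s hs).weak hsing le_rfl (Multiset.le_cons_self _ D)
        exact ⟨_, .orR hn⟩
    · intro t ht
      rcases Finset.mem_union.1 ht with ht | ht
      exacts [d4 t ht, c3 t ht]
    · intro t ht
      rcases Finset.mem_union.1 ht with ht | ht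
      exacts [d6 t ht, c4 t ht]
    · intro t ht
      rcases Finset.mem_union.1 ht with ht | ht
      · exact ⟨a, by simp, d5 t ht⟩
      · obtain ⟨s, hs, h'⟩ := c5 t ht
        exact ⟨s, by simp [hs], h'⟩

theorem rule_step {Rs : Set GeomRule} {Γ₁ Γ₂ Δ₁ Δ₂ : Multiset Fm}
    (hsing : ∀ R ∈ Rs, R.Singular)
    (L : List (Multiset Fm × Multiset Fm)) (h : ∀ s ∈ L, Intp Rs s.1 Γ₂ s.2 Δ₂)
    (hrel : ∀ s ∈ L, ∀ r ∈ relsM s.1 ∪ relsM s.2, r ∈ relsM Γ₁ ∪ relsM Δ₁)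
    (hrule : ∀ C : Fm, (∀ t ∈ C.ter, t ∈ terM Γ₂ ∪ terM Δ₂) →
      (∀ s ∈ L, Derivable Rs s.1 (C ::ₘ s.2)) → Derivable Rs Γ₁ (C ::ₘ Δ₁)) :
    Intp Rs Γ₁ Γ₂ Δ₁ Δ₂ := by
  obtain ⟨C, c1, c2, c3, c4, c5⟩ := intp_combine hsing L h
  refine intp_gen hsing _ C le_rfl (hrule C c3 c1) c2 c3 ?_ c4
  intro r hr
  obtain ⟨s, hs, h'⟩ := c5 r hr
  exact hrel s hs r h'

theorem rule_one {Rs : Set GeomRule} {Γ₁ Γ₂ Δ₁ Δ₂ Γa Δa : Multiset Fm}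
    (hsing : ∀ R ∈ Rs, R.Singular) (h : Intp Rs Γa Γ₂ Δa Δ₂)
    (hrel : relsM Γa ∪ relsM Δa ⊆ relsM Γ₁ ∪ relsM Δ₁)
    (hrule : ∀ (C : Fm) (n : ℕ), (∀ t ∈ C.ter, t ∈ terM Γ₂ ∪ terM Δ₂) →
      DerG Rs n Γa (C ::ₘ Δa) → DerG Rs (n + 1) Γ₁ (C ::ₘ Δ₁)) :
    Intp Rs Γ₁ Γ₂ Δ₁ Δ₂ := by
  refine rule_step hsing [(Γa, Δa)] (by simpa using h) (by simpa using fun r hr => hrel hr) ?_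
  intro C h1 h2
  obtain ⟨n, hn⟩ := h2 _ (List.mem_singleton.2 rfl)
  exact ⟨_, hrule C n h1 hn⟩

theorem rule_two {Rs : Set GeomRule} {Γ₁ Γ₂ Δ₁ Δ₂ Γa Δa Γb Δb : Multiset Fm}
    (hsing : ∀ R ∈ Rs, R.Singular) (h : Intp Rs Γa Γ₂ Δa Δ₂) (h' : Intp Rs Γb Γ₂ Δb Δ₂)
    (hrel : relsM Γa ∪ relsM Δa ⊆ relsM Γ₁ ∪ relsM Δ₁)
    (hrel' : relsM Γb ∪ relsM Δb ⊆ relsM Γ₁ ∪ relsM Δ₁)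
    (hrule : ∀ C : Fm, Derivable Rs Γa (C ::ₘ Δa) → Derivable Rs Γb (C ::ₘ Δb) →
      Derivable Rs Γ₁ (C ::ₘ Δ₁)) :
    Intp Rs Γ₁ Γ₂ Δ₁ Δ₂ := by
  refine rule_step hsing [(Γa, Δa), (Γb, Δb)] (by simpa using ⟨h, h'⟩) ?_ ?_
  · intro s hs
    simp only [List.mem_cons, List.not_mem_nil, or_false] at hs
    rcases hs with rfl | rfl
    exacts [fun r hr => hrel hr, fun r hr => hrel' hr]
  · intro C _ h2
    exact hrule C (h2 (Γa, Δa) (by simp)) (h2 (Γb, Δb) (by simp))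

theorem cons_split {F : Fm} {Γ Γ₁ Γ₂ : Multiset Fm} (h : F ::ₘ Γ = Γ₁ + Γ₂) :
    (∃ Γ', Γ₁ = F ::ₘ Γ' ∧ Γ = Γ' + Γ₂) ∨ (∃ Γ', Γ₂ = F ::ₘ Γ' ∧ Γ = Γ' + Γ₁) := by
  have : F ∈ Γ₁ + Γ₂ := h ▸ Multiset.mem_cons_self F Γ
  rcases Multiset.mem_add.1 this with hm | hm
  · left
    obtain ⟨Γ', rfl⟩ := Multiset.exists_cons_of_mem hm
    exact ⟨Γ', rfl, by simpa using h⟩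
  · right
    obtain ⟨Γ', rfl⟩ := Multiset.exists_cons_of_mem hm
    rw [add_comm] at h
    exact ⟨Γ', rfl, by simpa using h⟩

theorem prinL {Rs : Set GeomRule} (hsing : ∀ R ∈ Rs, R.Singular) {F : Fm} {Γ Δ : Multiset Fm}
    (h : ∀ Γ₁ Γ₂ Δ₁ Δ₂, Γ = Γ₁ + Γ₂ → Δ = Δ₁ + Δ₂ → Intp Rs (F ::ₘ Γ₁) Γ₂ Δ₁ Δ₂)
    {Γ₁ Γ₂ Δ₁ Δ₂ : Multiset Fm} (h1 : F ::ₘ Γ = Γ₁ + Γ₂) (h2 : Δ = Δ₁ + Δ₂) :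
    Intp Rs Γ₁ Γ₂ Δ₁ Δ₂ := by
  rcases cons_split h1 with ⟨Γ', rfl, e⟩ | ⟨Γ', rfl, e⟩
  · exact h _ _ _ _ e h2
  · exact (h _ _ _ _ e (by rw [h2, add_comm])).symm hsing

theorem prinR {Rs : Set GeomRule} (hsing : ∀ R ∈ Rs, R.Singular) {F : Fm} {Γ Δ : Multiset Fm}
    (h : ∀ Γ₁ Γ₂ Δ₁ Δ₂, Γ = Γ₁ + Γ₂ → Δ = Δ₁ + Δ₂ → Intp Rs Γ₁ Γ₂ (F ::ₘ Δ₁) Δ₂)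
    {Γ₁ Γ₂ Δ₁ Δ₂ : Multiset Fm} (h1 : Γ = Γ₁ + Γ₂) (h2 : F ::ₘ Δ = Δ₁ + Δ₂) :
    Intp Rs Γ₁ Γ₂ Δ₁ Δ₂ := by
  rcases cons_split h2 with ⟨Γ', rfl, e⟩ | ⟨Γ', rfl, e⟩
  · exact h _ _ _ _ h1 e
  · exact (h _ _ _ _ (by rw [h1, add_comm]) e).symm hsing

theorem fold_imp {Rs : Set GeomRule} {Γ₂ Δ₂ Δ₁ : Multiset Fm} (P : Multiset Fm) :
    ∀ (C : Fm) (Γ₁ : Multiset Fm), (∀ A ∈ P, A.isAtom ∧ A ∈ Γ₂) →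
    Derivable Rs (P + Γ₁) (C ::ₘ Δ₁) → Derivable Rs (C ::ₘ Γ₂) Δ₂ →
    ∃ D : Fm, Derivable Rs Γ₁ (D ::ₘ Δ₁) ∧ Derivable Rs (D ::ₘ Γ₂) Δ₂ ∧
      D.ter ⊆ C.ter ∪ terM P ∧ D.rels ⊆ C.rels ∪ relsM P := by
  induction P using Multiset.induction_on with
  | empty =>
    intro C Γ₁ _ h1 h2
    exact ⟨C, by simpa using h1, h2, Finset.subset_union_left, Finset.subset_union_left⟩
  | cons a P ih =>
    intro C Γ₁ hP h1 h2
    rw [Multiset.forall_mem_cons] at hP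
    have h1' : Derivable Rs (P + Γ₁) (Fm.imp a C ::ₘ Δ₁) := by
      obtain ⟨n, hn⟩ := h1
      rw [Multiset.cons_add] at hn
      exact ⟨_, .impR hn⟩
    have h2' : Derivable Rs (Fm.imp a C ::ₘ Γ₂) Δ₂ := by
      refine dImpL ?_ h2
      obtain ⟨Γ', e⟩ := Multiset.exists_cons_of_mem hP.1.2
      rw [e]; exact ⟨0, .ax hP.1.1⟩
    obtain ⟨D, d1, d2, d3, d4⟩ := ih _ _ hP.2 h1' h2'
    refine ⟨D, d1, d2, d3.trans ?_, d4.trans ?_⟩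
    · intro t; simp only [Fm.ter, terM_cons, Finset.mem_union]; tauto
    · intro t; simp only [Fm.rels, relsM_cons, Finset.mem_union]; tauto

theorem geom_step {Rs : Set GeomRule} (hsing : ∀ R ∈ Rs, R.Singular) {n : ℕ}
    (IH : ∀ Γ₁ Γ₂ Δ₁ Δ₂, DerG Rs n (Γ₁ + Γ₂) (Δ₁ + Δ₂) → Intp Rs Γ₁ Γ₂ Δ₁ Δ₂)
    {R : GeomRule} {σ : ℕ → Tm} (hR : R ∈ Rs) {Γ₁ Γ₂ Δ₁ Δ₂ : Multiset Fm}
    (hle : R.inst σ ≤ Γ₁ + Γ₂)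
    (hfresh : ∀ q ∈ R.QYs, ∃ z : ℕ, σ q.2 = Tm.var z ∧
          Tm.var z ∉ terM (Γ₁ + Γ₂) ∪ terM (Δ₁ + Δ₂))
    (hprem : ∀ q ∈ R.QYs, DerG Rs n (Fm.applyσ σ q.1 ::ₘ (Γ₁ + Γ₂)) (Δ₁ + Δ₂))
    (hrels : relsM (R.inst σ) ⊆ relsM Γ₁) : Intp Rs Γ₁ Γ₂ Δ₁ Δ₂ := by
  obtain ⟨P, hP⟩ : ∃ P, P = R.inst σ - Γ₁ := ⟨_, rfl⟩
  have hPi : P ≤ R.inst σ := hP ▸ tsub_le_self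
  have hP2 : P ≤ Γ₂ := by rw [hP]; exact tsub_le_iff_left.2 hle
  obtain ⟨Γ0, hΓ0⟩ : ∃ Γ0, P + Γ₁ = R.inst σ + Γ0 := by
    apply Multiset.le_iff_exists_add.1
    rw [hP]; exact tsub_le_iff_right.1 le_rfl
  have hterP : ∀ t ∈ terM P, t ∈ terM Γ₂ := by
    intro t ht
    obtain ⟨A, hA, h⟩ := mem_terM.1 ht
    exact mem_terM.2 ⟨A, Multiset.mem_of_le hP2 hA, h⟩
  have hrelP1 : ∀ t ∈ relsM P, t ∈ relsM Γ₁ := by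
    intro t ht
    obtain ⟨A, hA, h⟩ := mem_relsM.1 ht
    exact hrels (mem_relsM.2 ⟨A, Multiset.mem_of_le hPi hA, h⟩)
  have hrelP2 : ∀ t ∈ relsM P, t ∈ relsM Γ₂ := by
    intro t ht
    obtain ⟨A, hA, h⟩ := mem_relsM.1 ht
    exact mem_relsM.2 ⟨A, Multiset.mem_of_le hP2 hA, h⟩
  have hrelQ : ∀ q ∈ R.QYs, ∀ r ∈ (Fm.applyσ σ q.1).rels, r ∈ relsM Γ₁ := by
    intro q hq r hr
    rw [rels_applyσ] at hr
    have h1 : r ∈ relsL (R.QYs.map Prod.fst) :=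
      mem_relsL.2 ⟨q.1, List.mem_map.2 ⟨q, hq, rfl⟩, hr⟩
    obtain ⟨A, hA, h⟩ := mem_relsL.1 ((hsing R hR).2.2.2 h1)
    refine hrels (mem_relsM.2 ⟨A.applyσ σ, ?_, by rwa [rels_applyσ]⟩)
    simp only [GeomRule.inst, Multiset.mem_coe, List.mem_map]
    exact ⟨A, hA, rfl⟩
  obtain ⟨C, c1, c2, c3, c4, c5⟩ := intp_combine (Γ₂ := Γ₂) (Δ₂ := Δ₂) hsing
    (R.QYs.map (fun q => (Fm.applyσ σ q.1 ::ₘ (P + Γ₁), Δ₁))) (by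
      intro s hs
      obtain ⟨q, hq, rfl⟩ := List.mem_map.1 hs
      apply IH
      have := der_weak hsing (hprem q hq) P 0
      rw [add_zero] at this
      have e : Fm.applyσ σ q.1 ::ₘ (P + Γ₁) + Γ₂ = Fm.applyσ σ q.1 ::ₘ (Γ₁ + Γ₂) + P := by
        simp only [Multiset.cons_add]; congr 1; abel
      rw [e]; exact this)
  have hd : Derivable Rs (P + Γ₁) (C ::ₘ Δ₁) := by
    rw [hΓ0]
    refine dGeom hR ?_ ?_
    · intro q hq
      obtain ⟨z, hz, hz'⟩ := hfresh q hq
      refine ⟨z, hz, ?_⟩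
      rw [← hΓ0]
      have h3 := c3 (Tm.var z)
      have h4 := hterP (Tm.var z)
      simp only [terM_add, terM_cons, Finset.mem_union] at *
      tauto
    · intro q hq
      rw [← hΓ0]
      exact c1 _ (List.mem_map.2 ⟨q, hq, rfl⟩)
  obtain ⟨D, d1, d2, d3, d4⟩ := fold_imp P C Γ₁ (by
    intro A hA
    refine ⟨?_, Multiset.mem_of_le hP2 hA⟩
    have := Multiset.mem_of_le hPi hA
    simp only [GeomRule.inst, Multiset.mem_coe, List.mem_map] at this
    obtain ⟨A', hA', rfl⟩ := this
    exact applyσ_atom _ (R.atomP A' hA') σ) hd c2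
  refine intp_gen hsing _ D le_rfl d1 d2 ?_ ?_ ?_
  · intro t ht
    rcases Finset.mem_union.1 (d3 ht) with h | h
    · exact c3 t h
    · exact Finset.mem_union_left _ (hterP t h)
  · intro r hr
    rcases Finset.mem_union.1 (d4 hr) with h | h
    · obtain ⟨s, hs, h'⟩ := c5 r h
      obtain ⟨q, hq, rfl⟩ := List.mem_map.1 hs
      have h1 := hrelQ q hq r
      have h2 := hrelP1 r
      simp only [relsM_add, relsM_cons, Finset.mem_union] at *
      tauto
    · exact Finset.mem_union_left _ (hrelP1 r h)
  · intro r hr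
    rcases Finset.mem_union.1 (d4 hr) with h | h
    · exact c4 r h
    · exact Finset.mem_union_left _ (hrelP2 r h)

theorem inst_rels_eq {R : GeomRule} (hs : R.Singular) (σ : ℕ → Tm) {a b : ℕ}
    (ha : a ∈ relsM (R.inst σ)) (hb : b ∈ relsM (R.inst σ)) : a = b := by
  have key : ∀ a ∈ relsM (R.inst σ), a ∈ relsL R.Ps ∪ relsL (R.QYs.map Prod.fst) := by
    intro a ha
    obtain ⟨A, hA, h⟩ := mem_relsM.1 ha
    simp only [GeomRule.inst, Multiset.mem_coe, List.mem_map] at hA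
    obtain ⟨A', hA', rfl⟩ := hA
    rw [rels_applyσ] at h
    exact Finset.mem_union_left _ (mem_relsL.2 ⟨A', hA', h⟩)
  exact Finset.card_le_one.1 hs.2.2.1 a (key a ha) b (key b hb)

theorem intp_main {Rs : Set GeomRule} (hsing : ∀ R ∈ Rs, R.Singular) (n : ℕ) :
    ∀ Γ Δ, DerG Rs n Γ Δ → ∀ Γ₁ Γ₂ Δ₁ Δ₂, Γ = Γ₁ + Γ₂ → Δ = Δ₁ + Δ₂ →
      Intp Rs Γ₁ Γ₂ Δ₁ Δ₂ := by
  induction n using Nat.strong_induction_on with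
  | _ n ih0 =>
  intro Γ Δ h Γ₁ Γ₂ Δ₁ Δ₂ e1 e2
  have ih : ∀ m, m < n → ∀ Γ₁ Γ₂ Δ₁ Δ₂, DerG Rs m (Γ₁ + Γ₂) (Δ₁ + Δ₂) →
      Intp Rs Γ₁ Γ₂ Δ₁ Δ₂ := fun m hm _ _ _ _ h => ih0 m hm _ _ h _ _ _ _ rfl rfl
  clear ih0
  cases h with
  | @ax _ P Γ Δ hP =>
    refine prinL hsing ?_ e1 e2
    clear e1 e2
    rintro Γ₁ Γ₂ Δ₁ Δ₂ rfl e
    rcases cons_split e with ⟨Δ', rfl, -⟩ | ⟨Δ', rfl, -⟩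
    · refine ⟨.bot, ⟨0, ?_⟩, ⟨0, .botL⟩, by simp [Fm.ter], by simp [Fm.ter], by simp [Fm.rels],
        by simp [Fm.rels]⟩
      rw [Multiset.cons_swap]; exact .ax hP
    · refine ⟨P, ⟨0, .ax hP⟩, ⟨0, .ax hP⟩, ?_, ?_, ?_, ?_⟩ <;> intro t ht <;>
        simp [terM_cons, relsM_cons, ht]
  | botL =>
    refine prinL hsing ?_ e1 e2
    clear e1 e2
    rintro Γ₁ Γ₂ Δ₁ Δ₂ rfl rfl
    exact ⟨.bot, ⟨0, .botL⟩, ⟨0, .botL⟩, by simp [Fm.ter], by simp [Fm.ter], by simp [Fm.rels],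
        by simp [Fm.rels]⟩
  | topR =>
    refine prinR hsing ?_ e1 e2
    clear e1 e2
    rintro Γ₁ Γ₂ Δ₁ Δ₂ rfl rfl
    refine ⟨.bot, ⟨0, ?_⟩, ⟨0, .botL⟩, by simp [Fm.ter], by simp [Fm.ter], by simp [Fm.rels],
        by simp [Fm.rels]⟩
    rw [Multiset.cons_swap]; exact .topR
  | @andL m A B Γ Δ h =>
    refine prinL hsing ?_ e1 e2
    clear e1 e2
    rintro Γ₁ Γ₂ Δ₁ Δ₂ rfl rfl
    refine rule_one hsing (ih m (by omega) (A ::ₘ B ::ₘ Γ₁) Γ₂ Δ₁ Δ₂ (by simpa using h)) ?_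
      (fun C k _ hk => .andL hk)
    intro r; simp only [relsM_cons, Fm.rels, Finset.mem_union]; tauto
  | @orR m A B Γ Δ h =>
    refine prinR hsing ?_ e1 e2
    clear e1 e2
    rintro Γ₁ Γ₂ Δ₁ Δ₂ rfl rfl
    refine rule_one hsing (ih m (by omega) Γ₁ Γ₂ (A ::ₘ B ::ₘ Δ₁) Δ₂ (by simpa using h)) ?_
      (fun C k _ hk => ?_)
    · intro r; simp only [relsM_cons, Fm.rels, Finset.mem_union]; tauto
    · rw [Multiset.cons_swap]
      rw [Multiset.cons_swap, Multiset.cons_swap C] at hk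
      exact .orR hk
  | @impR m A B Γ Δ h =>
    refine prinR hsing ?_ e1 e2
    clear e1 e2
    rintro Γ₁ Γ₂ Δ₁ Δ₂ rfl rfl
    refine rule_one hsing (ih m (by omega) (A ::ₘ Γ₁) Γ₂ (B ::ₘ Δ₁) Δ₂ (by simpa using h)) ?_
      (fun C k _ hk => ?_)
    · intro r; simp only [relsM_cons, Fm.rels, Finset.mem_union]; tauto
    · rw [Multiset.cons_swap] at hk ⊢
      exact .impR hk
  | @andR m A B Γ Δ h h' =>
    refine prinR hsing ?_ e1 e2
    clear e1 e2
    rintro Γ₁ Γ₂ Δ₁ Δ₂ rfl rfl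
    refine rule_two hsing (ih m (by omega) Γ₁ Γ₂ (A ::ₘ Δ₁) Δ₂ (by simpa using h))
      (ih m (by omega) Γ₁ Γ₂ (B ::ₘ Δ₁) Δ₂ (by simpa using h')) ?_ ?_
      (fun C k k' => ?_)
    · intro r; simp only [relsM_cons, Fm.rels, Finset.mem_union]; tauto
    · intro r; simp only [relsM_cons, Fm.rels, Finset.mem_union]; tauto
    · rw [Multiset.cons_swap] at k k' ⊢
      exact dAndR k k'
  | @orL m A B Γ Δ h h' =>
    refine prinL hsing ?_ e1 e2
    clear e1 e2
    rintro Γ₁ Γ₂ Δ₁ Δ₂ rfl rfl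
    refine rule_two hsing (ih m (by omega) (A ::ₘ Γ₁) Γ₂ Δ₁ Δ₂ (by simpa using h))
      (ih m (by omega) (B ::ₘ Γ₁) Γ₂ Δ₁ Δ₂ (by simpa using h')) ?_ ?_
      (fun C k k' => dOrL k k')
    · intro r; simp only [relsM_cons, Fm.rels, Finset.mem_union]; tauto
    · intro r; simp only [relsM_cons, Fm.rels, Finset.mem_union]; tauto
  | @impL m A B Γ Δ h h' =>
    refine prinL hsing ?_ e1 e2
    clear e1 e2
    rintro Γ₁ Γ₂ Δ₁ Δ₂ rfl rfl
    refine rule_two hsing (ih m (by omega) Γ₁ Γ₂ (A ::ₘ Δ₁) Δ₂ (by simpa using h))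
      (ih m (by omega) (B ::ₘ Γ₁) Γ₂ Δ₁ Δ₂ (by simpa using h')) ?_ ?_
      (fun C k k' => ?_)
    · intro r; simp only [relsM_cons, Fm.rels, Finset.mem_union]; tauto
    · intro r; simp only [relsM_cons, Fm.rels, Finset.mem_union]; tauto
    · rw [Multiset.cons_swap] at k
      exact dImpL k k'
  | @allL m x A t Γ Δ hf h =>
    refine prinL hsing ?_ e1 e2
    clear e1 e2
    rintro Γ₁ Γ₂ Δ₁ Δ₂ rfl rfl
    refine rule_one hsing (ih m (by omega) (A.subst (Tm.var x) t ::ₘ Fm.all x A ::ₘ Γ₁) Γ₂ Δ₁ Δ₂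
      (by simpa using h)) ?_ (fun C k _ hk => .allL hf hk)
    intro r; simp only [relsM_cons, Fm.rels, Finset.mem_union, rels_subst]; tauto
  | @exR m x A t Γ Δ hf h =>
    refine prinR hsing ?_ e1 e2
    clear e1 e2
    rintro Γ₁ Γ₂ Δ₁ Δ₂ rfl rfl
    refine rule_one hsing (ih m (by omega) Γ₁ Γ₂ (Fm.ex x A ::ₘ A.subst (Tm.var x) t ::ₘ Δ₁) Δ₂
      (by simpa using h)) ?_ (fun C k _ hk => ?_)
    · intro r; simp only [relsM_cons, Fm.rels, Finset.mem_union, rels_subst]; tauto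
    · rw [Multiset.cons_swap, Multiset.cons_swap C] at hk
      rw [Multiset.cons_swap]
      exact .exR hf hk
  | @allR m x y A Γ Δ hf hy h =>
    refine prinR hsing ?_ e1 e2
    clear e1 e2
    rintro Γ₁ Γ₂ Δ₁ Δ₂ rfl rfl
    refine rule_one hsing (ih m (by omega) Γ₁ Γ₂ (A.subst (Tm.var x) (Tm.var y) ::ₘ Δ₁) Δ₂
      (by simpa using h)) ?_ (fun C k hC hk => ?_)
    · intro r; simp only [relsM_cons, Fm.rels, Finset.mem_union, rels_subst]; tauto
    · rw [Multiset.cons_swap] at hk ⊢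
      refine .allR hf ?_ hk
      have := hC (Tm.var y)
      simp only [terM_add, terM_cons, Finset.mem_union] at *
      tauto
  | @exL m x y A Γ Δ hf hy h =>
    refine prinL hsing ?_ e1 e2
    clear e1 e2
    rintro Γ₁ Γ₂ Δ₁ Δ₂ rfl rfl
    refine rule_one hsing (ih m (by omega) (A.subst (Tm.var x) (Tm.var y) ::ₘ Γ₁) Γ₂ Δ₁ Δ₂
      (by simpa using h)) ?_ (fun C k hC hk => ?_)
    · intro r; simp only [relsM_cons, Fm.rels, Finset.mem_union, rels_subst]; tauto
    · refine .exL hf ?_ hk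
      have := hC (Tm.var y)
      simp only [terM_add, terM_cons, Finset.mem_union] at *
      tauto
  | @geom m R σ Γ Δ hR hfresh hprem =>
    have hle : R.inst σ ≤ Γ₁ + Γ₂ := e1 ▸ Multiset.le_add_right _ _
    rw [e1, e2] at hfresh hprem
    by_cases hr : relsM (R.inst σ) ⊆ relsM Γ₁
    · exact geom_step hsing (ih m (by omega)) hR hle hfresh hprem hr
    · obtain ⟨r, hr1, hr2⟩ := Finset.not_subset.1 hr
      have hr3 : r ∈ relsM Γ₂ := by
        obtain ⟨A, hA, h⟩ := mem_relsM.1 hr1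
        have := mem_relsM.2 ⟨A, Multiset.mem_of_le hle hA, h⟩
        rw [relsM_add] at this
        exact (Finset.mem_union.1 this).resolve_left hr2
      rw [add_comm Γ₁, add_comm Δ₁] at hfresh hprem
      rw [add_comm Γ₁] at hle
      refine (geom_step hsing (ih m (by omega)) hR hle hfresh hprem ?_).symm hsing
      intro r' hr'
      rw [inst_rels_eq (hsing R hR) σ hr' hr1]; exact hr3

/-- Maehara's lemma for singular geometric extensions: for a
finite set R^s of singular geometric rules, every partition Γ₁;Γ₂⇒Δ₁;Δ₂ of a
sequent derivable in G+R^s has a split-interpolant. -/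
theorem maehara_singular (Rs : Set GeomRule) (hfin : Rs.Finite)
    (hsing : ∀ R ∈ Rs, R.Singular)
    (Γ₁ Γ₂ Δ₁ Δ₂ : Multiset Fm)
    (hder : Derivable Rs (Γ₁ + Γ₂) (Δ₁ + Δ₂)) :
    ∃ C : Fm, SplitInterpolant Rs Γ₁ Γ₂ Δ₁ Δ₂ C := by
  obtain ⟨n, hn⟩ := hder
  obtain ⟨C, c1, c2, c3, c4, c5, c6⟩ := intp_main hsing n _ _ hn _ _ _ _ rfl rfl
  refine ⟨C, c1, c2, ?_⟩
  have key : ∀ M : Multiset Fm, (∀ t ∈ C.ter, t ∈ terM M) → (∀ r ∈ C.rels, r ∈ relsM M) →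
      C.lang ⊆ langM M := by
    intro M h1 h2 s hs
    simp only [Fm.lang, Finset.mem_union, Finset.mem_image] at hs
    rw [mem_langM]
    rcases hs with ⟨t, ht, rfl⟩ | ⟨r, hr, rfl⟩
    · obtain ⟨A, hA, h⟩ := mem_terM.1 (h1 t ht)
      exact ⟨A, hA, by simp [Fm.lang, h]⟩
    · obtain ⟨A, hA, h⟩ := mem_relsM.1 (h2 r hr)
      exact ⟨A, hA, by simp [Fm.lang, h]⟩
  refine Finset.subset_inter (key _ ?_ ?_) (key _ ?_ ?_)
  · rwa [terM_add]
  · rwa [relsM_add]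
  · rwa [terM_add]
  · rwa [relsM_add]
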